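/- Fix K > 0. The family μ_K^∞[·] is mean-parameterized: for every ω ∈ ℝ, the first moment of μ_K^∞[ω] equals ω, i.e. ∑_{n∈ℤ} n · ∫_0^1 μ_K[ω,λ](n) dλ = ω. -/

import Mathlib

/-!
Write `M(λ) = ∑ n ρ_K[λ](n)` for the mean of the discrete Gaussian. The law `μ_K[ω,λ]` is that of
a difference of independent variables with laws `ρ_K[λ]` and `ρ_K[λ-ω]`, so its mean is
`M(λ) - M(λ-ω)` (`hasSum_mul_muK`). Translating the lattice gives `M(λ+1) = M(λ) + 1`
(`meanRho_add_one`), so `M(λ) - λ` is `1`-periodic and has the same integral over `[0,1]` and over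
`[-ω,1-ω]`; hence `∫₀¹ (M(λ) - M(λ-ω)) dλ = ω`.

Every exchange of sums, integrals and limits is justified by one bound, locally uniform in `λ`:
`(1+|n|) ρ_K[λ](n) ≤ exp(2Kλ²) w(n)` with `w(n) = (1+|n|) exp(-Kn²/2)` summable
(`rho_le`, `summable_wt`). On the double sum it suffices because
`|n| ≤ (1+|m|)(1+|m+n|)`.
-/

/-- Normalization constant `Z_K(λ) = ∑_{m∈ℤ} exp(−K(m−λ)²)`. -/
noncomputable def Zfun (K lam : ℝ) : ℝ :=
  ∑' m : ℤ, Real.exp (-K * ((m : ℝ) - lam) ^ 2)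

/-- Discrete Gaussian pmf `ρ_K[λ](n) = exp(−K(n−λ)²)/Z_K(λ)`. -/
noncomputable def rho (K lam : ℝ) (n : ℤ) : ℝ :=
  Real.exp (-K * ((n : ℝ) - lam) ^ 2) / Zfun K lam

/-- `μ_K[ω,λ](n) = ∑_{m∈ℤ} ρ_K[λ−ω](m) ρ_K[λ](m+n)`. -/
noncomputable def muK (K ω lam : ℝ) (n : ℤ) : ℝ :=
  ∑' m : ℤ, rho K (lam - ω) m * rho K lam (m + n)

open MeasureTheory

/-- The summable weight `(1+|n|) exp(-Kn²/2)` dominating the discrete Gaussians and their first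
moments. -/
noncomputable def wt (K : ℝ) (n : ℤ) : ℝ := (1 + |(n : ℝ)|) * Real.exp (-(K / 2) * (n : ℝ) ^ 2)

/-- The mean `∑ n ρ_K[λ](n)` of the discrete Gaussian. -/
noncomputable def meanRho (K lam : ℝ) : ℝ := ∑' n : ℤ, (n : ℝ) * rho K lam n

lemma wt_nonneg (K : ℝ) (n : ℤ) : 0 ≤ wt K n := by unfold wt; positivity

lemma summable_wt {K : ℝ} (hK : 0 < K) : Summable (wt K) := by
  have hT : 0 < K / (2 * Real.pi) := by positivity
  have h0 := summable_pow_mul_jacobiTheta₂_term_bound 0 hT 0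
  have h1 := summable_pow_mul_jacobiTheta₂_term_bound 0 hT 1
  refine (h0.add h1).congr fun n => ?_
  have : -Real.pi * (K / (2 * Real.pi) * (n : ℝ) ^ 2 - 2 * 0 * |(n : ℝ)|)
      = -(K / 2) * (n : ℝ) ^ 2 := by
    field_simp
    ring
  unfold wt
  push_cast
  rw [this]
  ring

lemma exp_le_wt {K : ℝ} (hK : 0 < K) (lam : ℝ) (n : ℤ) :
    (1 + |(n : ℝ)|) * Real.exp (-K * ((n : ℝ) - lam) ^ 2) ≤ Real.exp (K * lam ^ 2) * wt K n := by
  unfold wt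
  rw [mul_left_comm, ← Real.exp_add]
  gcongr
  nlinarith [mul_nonneg hK.le (sq_nonneg ((n : ℝ) - 2 * lam))]

lemma exp_le_wt' {K : ℝ} (hK : 0 < K) (lam : ℝ) (n : ℤ) :
    Real.exp (-K * ((n : ℝ) - lam) ^ 2) ≤ Real.exp (K * lam ^ 2) * wt K n := by
  refine le_trans ?_ (exp_le_wt hK lam n)
  exact le_mul_of_one_le_left (Real.exp_pos _).le (by linarith [abs_nonneg (n : ℝ)])

lemma summable_Z {K : ℝ} (hK : 0 < K) (lam : ℝ) :
    Summable fun m : ℤ => Real.exp (-K * ((m : ℝ) - lam) ^ 2) :=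
  Summable.of_nonneg_of_le (fun _ => (Real.exp_pos _).le) (exp_le_wt' hK lam)
    ((summable_wt hK).mul_left _)

/-- The lower bound on the normalization constant comes from its `m = 0` term. -/
lemma le_Zfun {K : ℝ} (hK : 0 < K) (lam : ℝ) : Real.exp (-K * lam ^ 2) ≤ Zfun K lam := by
  have := (summable_Z hK lam).le_tsum 0 (fun _ _ => (Real.exp_pos _).le)
  simpa [Zfun] using this

lemma Zfun_pos {K : ℝ} (hK : 0 < K) (lam : ℝ) : 0 < Zfun K lam :=
  (Real.exp_pos _).trans_le (le_Zfun hK lam)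

lemma rho_nonneg {K : ℝ} (hK : 0 < K) (lam : ℝ) (n : ℤ) : 0 ≤ rho K lam n :=
  div_nonneg (Real.exp_pos _).le (Zfun_pos hK lam).le

lemma rho_le {K : ℝ} (hK : 0 < K) (lam : ℝ) (n : ℤ) :
    (1 + |(n : ℝ)|) * rho K lam n ≤ Real.exp (2 * K * lam ^ 2) * wt K n := by
  unfold rho
  rw [← mul_div_assoc, div_le_iff₀ (Zfun_pos hK lam)]
  refine (exp_le_wt hK lam n).trans ?_
  have h : Real.exp (K * lam ^ 2)
      = Real.exp (2 * K * lam ^ 2) * Real.exp (-K * lam ^ 2) := by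
    rw [← Real.exp_add]; ring_nf
  rw [h, mul_right_comm]
  exact mul_le_mul_of_nonneg_left (le_Zfun hK lam)
    (mul_nonneg (Real.exp_pos _).le (wt_nonneg K n))

lemma rho_le_unif {K R : ℝ} (hK : 0 < K) {lam : ℝ} (hR : |lam| ≤ R) (n : ℤ) :
    (1 + |(n : ℝ)|) * rho K lam n ≤ Real.exp (2 * K * R ^ 2) * wt K n := by
  refine (rho_le hK lam n).trans ?_
  have : lam ^ 2 ≤ R ^ 2 := sq_le_sq' (by linarith [neg_abs_le lam]) ((le_abs_self _).trans hR)
  have := wt_nonneg K n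
  gcongr

lemma summable_rho {K : ℝ} (hK : 0 < K) (lam : ℝ) : Summable (rho K lam) :=
  (summable_Z hK lam).div_const _

lemma tsum_rho {K : ℝ} (hK : 0 < K) (lam : ℝ) : ∑' n, rho K lam n = 1 := by
  unfold rho
  rw [tsum_div_const]
  exact div_self (Zfun_pos hK lam).ne'

lemma summable_mul_rho {K : ℝ} (hK : 0 < K) (lam : ℝ) :
    Summable fun n : ℤ => (n : ℝ) * rho K lam n := by
  refine Summable.of_norm_bounded ((summable_wt hK).mul_left (Real.exp (2 * K * lam ^ 2)))
    fun n => ?_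
  refine le_trans ?_ (rho_le hK lam n)
  rw [norm_mul, Real.norm_eq_abs, Real.norm_of_nonneg (rho_nonneg hK lam n)]
  exact mul_le_mul_of_nonneg_right (by linarith) (rho_nonneg hK lam n)

lemma continuous_of_balls {f : ℝ → ℝ} (h : ∀ R, ContinuousOn f (Metric.ball 0 R)) :
    Continuous f :=
  continuous_iff_continuousAt.2 fun x =>
    (h (|x| + 1)).continuousAt (Metric.isOpen_ball.mem_nhds (by simp))

lemma abs_le_of_mem_ball {x R : ℝ} (h : x ∈ Metric.ball (0 : ℝ) R) : |x| ≤ R := by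
  simpa using (Metric.mem_ball.1 h).le

lemma continuous_Zfun {K : ℝ} (hK : 0 < K) : Continuous (Zfun K) := by
  refine continuous_of_balls fun R => ?_
  refine continuousOn_tsum (u := fun n => Real.exp (K * R ^ 2) * wt K n)
    (fun n => by fun_prop) ((summable_wt hK).mul_left _) fun n x hx => ?_
  rw [Real.norm_of_nonneg (Real.exp_pos _).le]
  refine (exp_le_wt' hK x n).trans ?_
  have hR := abs_le_of_mem_ball hx
  have : x ^ 2 ≤ R ^ 2 := sq_le_sq' (by linarith [neg_abs_le x]) ((le_abs_self _).trans hR)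
  have := wt_nonneg K n
  gcongr

lemma continuous_rho {K : ℝ} (hK : 0 < K) (n : ℤ) : Continuous fun lam => rho K lam n := by
  unfold rho
  exact Continuous.div (by fun_prop) (continuous_Zfun hK) fun x => (Zfun_pos hK x).ne'

lemma continuous_meanRho {K : ℝ} (hK : 0 < K) : Continuous (meanRho K) := by
  refine continuous_of_balls fun R => ?_
  refine continuousOn_tsum (u := fun n => Real.exp (2 * K * R ^ 2) * wt K n)
    (fun n => (continuous_const.mul (continuous_rho hK n)).continuousOn)
    ((summable_wt hK).mul_left _) fun n x hx => ?_
  refine le_trans ?_ (rho_le_unif hK (abs_le_of_mem_ball hx) n)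
  rw [norm_mul, Real.norm_eq_abs, Real.norm_of_nonneg (rho_nonneg hK x n)]
  exact mul_le_mul_of_nonneg_right (by linarith) (rho_nonneg hK x n)

lemma Zfun_add_one (K lam : ℝ) : Zfun K (lam + 1) = Zfun K lam := by
  unfold Zfun
  rw [← (Equiv.addRight (1 : ℤ)).tsum_eq]
  refine tsum_congr fun m => ?_
  simp

lemma rho_add_one (K lam : ℝ) (n : ℤ) : rho K (lam + 1) (n + 1) = rho K lam n := by
  unfold rho
  rw [Zfun_add_one]
  simp

lemma meanRho_add_one {K : ℝ} (hK : 0 < K) (lam : ℝ) :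
    meanRho K (lam + 1) = meanRho K lam + 1 := by
  have hsplit : meanRho K lam + 1 = ∑' n : ℤ, ((n : ℝ) * rho K lam n + rho K lam n) := by
    rw [(summable_mul_rho hK lam).tsum_add (summable_rho hK lam), tsum_rho hK]
    rfl
  rw [hsplit, meanRho, ← (Equiv.addRight (1 : ℤ)).tsum_eq]
  refine tsum_congr fun m => ?_
  simp only [Equiv.coe_addRight, rho_add_one]
  push_cast
  ring

/-- The shear `(n, m) ↦ (m, m + n)` turning the sum over differences into a product sum. -/
def shear : ℤ × ℤ ≃ ℤ × ℤ where
  toFun p := (p.2, p.2 + p.1)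
  invFun p := (p.2 - p.1, p.1)
  left_inv p := by simp
  right_inv p := by simp

lemma summable_wt_shear {K : ℝ} (hK : 0 < K) :
    Summable fun p : ℤ × ℤ => wt K p.2 * wt K (p.2 + p.1) :=
  (shear.summable_iff (f := fun p : ℤ × ℤ => wt K p.1 * wt K p.2)).2
    ((summable_wt hK).mul_of_nonneg (summable_wt hK) (wt_nonneg K) (wt_nonneg K))

/-- Domination of the double sum; the factor `1 + |n|` serves both `μ_K` and its first moment. -/
lemma prod_le {K R : ℝ} (hK : 0 < K) {a c : ℝ} (ha : |a| ≤ R) (hc : |c| ≤ R) (n m : ℤ) :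
    (1 + |(n : ℝ)|) * (rho K a m * rho K c (m + n))
      ≤ Real.exp (2 * K * R ^ 2) ^ 2 * (wt K m * wt K (m + n)) := by
  have h1 := rho_le_unif hK ha m
  have h2 := rho_le_unif hK hc (m + n)
  have r1 := rho_nonneg hK a m
  have r2 := rho_nonneg hK c (m + n)
  have hn : 1 + |(n : ℝ)| ≤ (1 + |(m : ℝ)|) * (1 + |((m + n : ℤ) : ℝ)|) := by
    have : |(n : ℝ)| ≤ |((m + n : ℤ) : ℝ)| + |(m : ℝ)| := by
      have := abs_sub ((m + n : ℤ) : ℝ) (m : ℝ)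
      simpa using this
    nlinarith [mul_nonneg (abs_nonneg (m : ℝ)) (abs_nonneg ((m + n : ℤ) : ℝ))]
  calc _ ≤ (1 + |(m : ℝ)|) * (1 + |((m + n : ℤ) : ℝ)|) * (rho K a m * rho K c (m + n)) := by
        gcongr
    _ = ((1 + |(m : ℝ)|) * rho K a m) * ((1 + |((m + n : ℤ) : ℝ)|) * rho K c (m + n)) := by ring
    _ ≤ (Real.exp (2 * K * R ^ 2) * wt K m) * (Real.exp (2 * K * R ^ 2) * wt K (m + n)) := by
        have := wt_nonneg K m
        gcongr
    _ = _ := by ring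

lemma summable_conv {K : ℝ} (hK : 0 < K) (n : ℤ) :
    Summable fun m : ℤ => wt K m * wt K (m + n) :=
  (summable_wt_shear hK).prod_factor n

lemma muK_term_le {K R : ℝ} (hK : 0 < K) {a c : ℝ} (ha : |a| ≤ R) (hc : |c| ≤ R) (n m : ℤ) :
    ‖rho K a m * rho K c (m + n)‖
      ≤ Real.exp (2 * K * R ^ 2) ^ 2 * (wt K m * wt K (m + n)) := by
  have h0 := mul_nonneg (rho_nonneg hK a m) (rho_nonneg hK c (m + n))
  rw [Real.norm_of_nonneg h0]
  exact (le_mul_of_one_le_left h0 (by linarith [abs_nonneg (n : ℝ)])).trans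
    (prod_le hK ha hc n m)

lemma moment_term_le {K R : ℝ} (hK : 0 < K) {a c : ℝ} (ha : |a| ≤ R) (hc : |c| ≤ R) (n m : ℤ) :
    ‖(n : ℝ) * (rho K a m * rho K c (m + n))‖
      ≤ Real.exp (2 * K * R ^ 2) ^ 2 * (wt K m * wt K (m + n)) := by
  have h0 := mul_nonneg (rho_nonneg hK a m) (rho_nonneg hK c (m + n))
  rw [norm_mul, Real.norm_of_nonneg h0, Real.norm_eq_abs]
  exact (mul_le_mul_of_nonneg_right (by linarith) h0).trans (prod_le hK ha hc n m)

lemma continuous_muK {K : ℝ} (hK : 0 < K) (ω : ℝ) (n : ℤ) :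
    Continuous fun lam => muK K ω lam n := by
  refine continuous_of_balls fun R => ?_
  refine continuousOn_tsum
    (u := fun m => Real.exp (2 * K * (R + |ω|) ^ 2) ^ 2 * (wt K m * wt K (m + n)))
    (fun m => ?_) ((summable_conv hK n).mul_left _) fun m x hx => ?_
  · exact (((continuous_rho hK m).comp (continuous_id.sub continuous_const)).mul
      (continuous_rho hK (m + n))).continuousOn
  · have hR := abs_le_of_mem_ball hx
    exact muK_term_le hK ((abs_sub x ω).trans (by linarith))
      (by linarith [abs_nonneg ω]) n m

lemma hasSum_prod_mul {f g : ℤ → ℝ} (hf : Summable f) (hg : Summable g) :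
    HasSum (fun p : ℤ × ℤ => f p.1 * g p.2) ((∑' n, f n) * ∑' n, g n) :=
  hf.hasSum.mul hg.hasSum (summable_mul_of_summable_norm (f := f) (g := g) hf.norm hg.norm)

/-- The mean of a difference of independent variables is the difference of the means. -/
lemma hasSum_mul_muK {K : ℝ} (hK : 0 < K) (ω lam : ℝ) :
    HasSum (fun n : ℤ => (n : ℝ) * muK K ω lam n) (meanRho K lam - meanRho K (lam - ω)) := by
  have hs : Summable fun p : ℤ × ℤ =>
      (p.1 : ℝ) * (rho K (lam - ω) p.2 * rho K lam (p.2 + p.1)) :=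
    Summable.of_norm_bounded ((summable_wt_shear hK).mul_left _) fun p =>
      moment_term_le hK (le_max_left |lam - ω| |lam|) (le_max_right _ _) p.1 p.2
  have hprod : HasSum (fun p : ℤ × ℤ =>
      rho K (lam - ω) p.1 * ((p.2 : ℝ) * rho K lam p.2)
        - ((p.1 : ℝ) * rho K (lam - ω) p.1) * rho K lam p.2)
      (meanRho K lam - meanRho K (lam - ω)) := by
    have s0 := summable_rho hK lam
    have s0' := summable_rho hK (lam - ω)
    have s1 := summable_mul_rho hK lam
    have s1' := summable_mul_rho hK (lam - ω)
    have e1 := hasSum_prod_mul s0' s1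
    have e2 := hasSum_prod_mul s1' s0
    rw [tsum_rho hK, one_mul] at e1
    rw [tsum_rho hK, mul_one] at e2
    exact e1.sub e2
  have hsum : HasSum (fun p : ℤ × ℤ =>
      (p.1 : ℝ) * (rho K (lam - ω) p.2 * rho K lam (p.2 + p.1)))
      (meanRho K lam - meanRho K (lam - ω)) := by
    refine (shear.hasSum_iff.2 hprod).congr_fun fun p => ?_
    simp only [Function.comp, shear, Equiv.coe_fn_mk]
    push_cast
    ring
  refine hsum.prod_fiberwise fun n => ?_
  have := (hs.prod_factor n).hasSum
  simpa only [muK, tsum_mul_left] using this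

/-- `λ ↦ M(λ) - λ` is `1`-periodic, so its integral over a period does not depend on the base
point. -/
lemma integral_meanRho_sub {K : ℝ} (hK : 0 < K) (ω : ℝ) :
    ∫ lam in (0 : ℝ)..1, (meanRho K lam - meanRho K (lam - ω)) = ω := by
  have hc := continuous_meanRho hK
  have hper : Function.Periodic (fun x => meanRho K x - x) 1 := fun x => by
    simp only [meanRho_add_one hK]
    ring
  have h := hper.intervalIntegral_add_eq 0 (-ω)
  have hi : ∀ a b, IntervalIntegrable (meanRho K) volume a b := fun a b =>
    hc.intervalIntegrable a b
  have hid : ∀ a b : ℝ, IntervalIntegrable (fun x : ℝ => x) volume a b := fun a b =>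
    continuous_id.intervalIntegrable a b
  rw [intervalIntegral.integral_sub (hi _ _) (hid _ _),
    intervalIntegral.integral_sub (hi _ _) (hid _ _), integral_id, integral_id] at h
  have hc' : Continuous fun x => meanRho K (x - ω) :=
    hc.comp (continuous_id.sub continuous_const)
  rw [intervalIntegral.integral_sub (hi _ _) (hc'.intervalIntegrable _ _),
    intervalIntegral.integral_comp_sub_right (meanRho K) ω]
  have e1 : (0 : ℝ) - ω = -ω := by ring
  have e2 : (1 : ℝ) - ω = -ω + 1 := by ring
  rw [e1, e2]
  rw [zero_add] at h
  linarith

theorem stmt11 (K : ℝ) (hK : 0 < K) (ω : ℝ) :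
    ∑' n : ℤ, (n : ℝ) * ∫ lam in (0 : ℝ)..1, muK K ω lam n = ω := by
  set R : ℝ := 1 + |ω| with hR
  have hmain : HasSum (fun n : ℤ => ∫ lam in (0 : ℝ)..1, (n : ℝ) * muK K ω lam n)
      (∫ lam in (0 : ℝ)..1, (meanRho K lam - meanRho K (lam - ω))) := by
    refine intervalIntegral.hasSum_integral_of_dominated_convergence
      (fun n _ => ∑' m, Real.exp (2 * K * R ^ 2) ^ 2 * (wt K m * wt K (m + n)))
      (fun n => (continuous_const.mul (continuous_muK hK ω n)).aestronglyMeasurable)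
      (fun n => Filter.Eventually.of_forall fun x hx => ?_)
      (Filter.Eventually.of_forall fun x _ => ?_) ?_
      (Filter.Eventually.of_forall fun x _ => hasSum_mul_muK hK ω x)
    · rw [Set.uIoc_of_le zero_le_one] at hx
      have hx1 : |x| ≤ 1 := abs_le.2 ⟨by linarith [hx.1], hx.2⟩
      rw [muK, ← tsum_mul_left]
      exact tsum_of_norm_bounded ((summable_conv hK n).mul_left _).hasSum fun m =>
        moment_term_le hK ((abs_sub x ω).trans (by linarith)) (by linarith [abs_nonneg ω]) n m
    · exact ((summable_wt_shear hK).mul_left (Real.exp (2 * K * R ^ 2) ^ 2)).prod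
    · exact intervalIntegrable_const
  simp_rw [intervalIntegral.integral_const_mul] at hmain
  rw [hmain.tsum_eq, integral_meanRho_sub hK]
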